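/- Let U, δ, η ∈ ℝ³ and let A_i, B_i be real 3×3 matrices. Set A_e = A_i + δ⊗n and B_e = B_i + η⊗n, and assume the transmission conditions ℂᵉ A_e n = ℂⁱ A_i n and ℂᵉ B_e n = ℂⁱ B_i n. For s ∈ {i, e} define the vector b^s = (ℂ^s A_s · B_s) U − (ℂ^s A_s)(B_s U) − (ℂ^s B_s)(A_s U). Then (b^i − b^e) · n = −(U · n) (𝕄 Â_e) · B̂_e. -/

import Mathlib

open Matrix

/-- Symmetric part of a matrix. -/
noncomputable def symPart (A : Matrix (Fin 3) (Fin 3) ℝ) : Matrix (Fin 3) (Fin 3) ℝ :=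
  (1 / 2 : ℝ) • (A + Aᵀ)

/-- Isotropic elasticity tensor with Lamé parameters `lam`, `mu`:
`ℂ A = 2μ Â + λ (tr A) I₃`. -/
noncomputable def elastC (lam mu : ℝ) (A : Matrix (Fin 3) (Fin 3) ℝ) :
    Matrix (Fin 3) (Fin 3) ℝ :=
  (2 * mu) • symPart A + (lam * A.trace) • (1 : Matrix (Fin 3) (Fin 3) ℝ)

/-- The difference tensor `ℂᵉ − ℂⁱ` applied to `A`. -/
noncomputable def Cdiff (lami mui lame mue : ℝ) (A : Matrix (Fin 3) (Fin 3) ℝ) :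
    Matrix (Fin 3) (Fin 3) ℝ :=
  elastC lame mue A - elastC lami mui A

/-- `Q` is the inverse of the positive definite matrix `μⁱI₃ + (λⁱ+μⁱ) n⊗n`. -/
noncomputable def Qmat (lami mui : ℝ) (n : Fin 3 → ℝ) : Matrix (Fin 3) (Fin 3) ℝ :=
  (mui • (1 : Matrix (Fin 3) (Fin 3) ℝ) + (lami + mui) • vecMulVec n n)⁻¹

/-- The elastic moment tensor
`𝕄A = (ℂᵉ−ℂⁱ)A + (ℂᵉ−ℂⁱ)[(Q((ℂᵉ−ℂⁱ)A n))⊗n]`. -/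
noncomputable def emt (lami mui lame mue : ℝ) (n : Fin 3 → ℝ)
    (A : Matrix (Fin 3) (Fin 3) ℝ) : Matrix (Fin 3) (Fin 3) ℝ :=
  Cdiff lami mui lame mue A +
    Cdiff lami mui lame mue
      (vecMulVec ((Qmat lami mui n).mulVec ((Cdiff lami mui lame mue A).mulVec n)) n)


/-- Frobenius inner product of real 3×3 matrices. -/
def frob (A B : Matrix (Fin 3) (Fin 3) ℝ) : ℝ := ∑ i, ∑ j, A i j * B i j

/-!
Symmetry of the stresses moves them onto `n` in `bˢ · n`, so the last two terms of `bˢ` see only the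
tractions, which agree on the two sides; with the major symmetry of `ℂᵉ` this gives the jump
`-(U · n) (ℂᵉ - ℂⁱ) A_i · B_e` for arbitrary (anisotropic) elasticity tensors. In the isotropic case
`ℂⁱ (d ⊗ n) n = (μⁱ I₃ + (λⁱ + μⁱ) n ⊗ n) d`, so the transmission condition for `A` says
`Q ((ℂᵉ - ℂⁱ) A_e n) = -δ`. The correction term in `𝕄` therefore replaces `A_e` by
`A_e - δ ⊗ n = A_i`, that is, `𝕄 Â_e = (ℂᵉ - ℂⁱ) A_i`.
-/

section MatrixVector

theorem isUnit_smul_one_add_smul_vecMulVec {ι K : Type*} [Fintype ι] [DecidableEq ι] [Field K]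
    {a b : K} {u v : ι → K} (ha : a ≠ 0) (hab : a + b * (v ⬝ᵥ u) ≠ 0) :
    IsUnit (a • (1 : Matrix ι ι K) + b • vecMulVec u v) := by
  have h_factor : a • (1 : Matrix ι ι K) + b • vecMulVec u v =
      a • (1 + replicateCol Unit ((a⁻¹ * b) • u) * replicateRow Unit v) := by
    rw [← vecMulVec_eq, smul_vecMulVec, smul_add, smul_smul, mul_inv_cancel_left₀ ha]
  have h_scalar : 1 + v ⬝ᵥ ((a⁻¹ * b) • u) = a⁻¹ * (a + b * (v ⬝ᵥ u)) := by
    rw [dotProduct_smul, smul_eq_mul, mul_add, inv_mul_cancel₀ ha, mul_assoc]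
  rw [isUnit_iff_isUnit_det, isUnit_iff_ne_zero, h_factor, det_smul,
    det_one_add_replicateCol_mul_replicateRow, h_scalar]
  exact mul_ne_zero (pow_ne_zero _ ha) (mul_ne_zero (inv_ne_zero ha) hab)

theorem mulVec_dotProduct_of_isSymm {ι R : Type*} [Fintype ι] [CommSemiring R]
    {A : Matrix ι ι R} (hA : A.IsSymm) (x y : ι → R) :
    (A *ᵥ x) ⬝ᵥ y = (A *ᵥ y) ⬝ᵥ x := by
  rw [dotProduct_comm, ← dotProduct_transpose_mulVec, hA.eq, dotProduct_comm]

theorem add_vecMulVec_mulVec {ι κ R : Type*} [Fintype κ] [CommSemiring R]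
    (A : Matrix ι κ R) (d : ι → R) (n x : κ → R) :
    (A + vecMulVec d n) *ᵥ x = A *ᵥ x + (n ⬝ᵥ x) • d := by
  rw [add_mulVec, vecMulVec_mulVec, op_smul_eq_smul]

end MatrixVector

section Frobenius

variable (A B C : Matrix (Fin 3) (Fin 3) ℝ)

theorem frob_eq_trace : frob A B = trace (A * Bᵀ) :=
  sum_hadamard_eq A B

theorem frob_comm : frob A B = frob B A := by
  simp only [frob, mul_comm]

theorem frob_add_left : frob (A + B) C = frob A C + frob B C := by
  simp only [frob_eq_trace, add_mul, trace_add]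

theorem frob_sub_left : frob (A - B) C = frob A C - frob B C := by
  simp only [frob_eq_trace, sub_mul, trace_sub]

theorem frob_smul_left (c : ℝ) : frob (c • A) B = c * frob A B := by
  simp only [frob_eq_trace, smul_mul, trace_smul, smul_eq_mul]

theorem frob_add_right : frob A (B + C) = frob A B + frob A C := by
  simp only [frob_comm A, frob_add_left]

theorem frob_smul_right (c : ℝ) : frob A (c • B) = c * frob A B := by
  simp only [frob_comm A, frob_smul_left]

theorem frob_one_left : frob 1 A = A.trace := by
  rw [frob_eq_trace, one_mul, trace_transpose]

theorem frob_transpose_right : frob A Bᵀ = frob Aᵀ B := by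
  rw [frob_eq_trace, frob_eq_trace, transpose_transpose, ← trace_transpose_mul]

theorem frob_vecMulVec_right (a b : Fin 3 → ℝ) : frob A (vecMulVec a b) = (A *ᵥ b) ⬝ᵥ a := by
  rw [frob_eq_trace, transpose_vecMulVec, mul_vecMulVec, trace_vecMulVec]

end Frobenius

section SymPart

variable (A B : Matrix (Fin 3) (Fin 3) ℝ)

theorem isSymm_symPart : (symPart A).IsSymm :=
  (isSymm_add_transpose_self A).smul _

theorem symPart_add : symPart (A + B) = symPart A + symPart B := by
  rw [symPart, symPart, symPart, transpose_add, add_add_add_comm, smul_add]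

variable {A} in
theorem symPart_eq_self_of_isSymm (hA : A.IsSymm) : symPart A = A := by
  rw [symPart, hA.eq, ← two_smul ℝ A, smul_smul]
  norm_num

theorem trace_symPart : (symPart A).trace = A.trace := by
  rw [symPart, trace_smul, trace_add, trace_transpose, smul_eq_mul]
  ring

variable {A} in
theorem frob_symPart_right_of_isSymm (hA : A.IsSymm) : frob A (symPart B) = frob A B := by
  rw [symPart, frob_smul_right, frob_add_right, frob_transpose_right, hA.eq]
  ring

end SymPart

section IsotropicTensor

variable (lam mu : ℝ) (A B : Matrix (Fin 3) (Fin 3) ℝ)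

theorem isSymm_elastC : (elastC lam mu A).IsSymm :=
  ((isSymm_symPart A).smul _).add (isSymm_one.smul _)

theorem elastC_add : elastC lam mu (A + B) = elastC lam mu A + elastC lam mu B := by
  simp only [elastC, symPart_add, trace_add, smul_add, mul_add, add_smul]
  abel

theorem elastC_symPart : elastC lam mu (symPart A) = elastC lam mu A := by
  rw [elastC, elastC, symPart_eq_self_of_isSymm (isSymm_symPart A), trace_symPart]

theorem frob_elastC_left :
    frob (elastC lam mu A) B =
      2 * mu * frob (symPart A) (symPart B) + lam * A.trace * B.trace := by
  rw [elastC, frob_add_left, frob_smul_left, frob_smul_left, frob_one_left,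
    frob_symPart_right_of_isSymm B (isSymm_symPart A)]

theorem frob_elastC_comm : frob (elastC lam mu A) B = frob (elastC lam mu B) A := by
  rw [frob_elastC_left, frob_elastC_left, frob_comm, mul_right_comm lam]

end IsotropicTensor

section AcousticTensor

variable {lam mu : ℝ} {n : Fin 3 → ℝ}

/-- The acoustic (Christoffel) tensor `μ I₃ + (λ + μ) n ⊗ n` of the isotropic medium with Lamé
parameters `lam`, `mu` in the unit direction `n`; it maps `d` to the traction `ℂ (d ⊗ n) n`. -/
noncomputable def acousticTensor (lam mu : ℝ) (n : Fin 3 → ℝ) : Matrix (Fin 3) (Fin 3) ℝ :=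
  mu • (1 : Matrix (Fin 3) (Fin 3) ℝ) + (lam + mu) • vecMulVec n n

theorem elastC_vecMulVec_mulVec (hn : n ⬝ᵥ n = 1) (d : Fin 3 → ℝ) :
    elastC lam mu (vecMulVec d n) *ᵥ n = acousticTensor lam mu n *ᵥ d := by
  simp only [elastC, symPart, acousticTensor, transpose_vecMulVec, trace_vecMulVec, add_mulVec,
    smul_mulVec, vecMulVec_mulVec, one_mulVec, op_smul_eq_smul, hn, dotProduct_comm n d]
  module

theorem Qmat_mulVec_acousticTensor_mulVec (hmu : mu ≠ 0) (hlam : lam + 2 * mu ≠ 0)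
    (hn : n ⬝ᵥ n = 1) (d : Fin 3 → ℝ) :
    Qmat lam mu n *ᵥ (acousticTensor lam mu n *ᵥ d) = d := by
  have h_unit : IsUnit (acousticTensor lam mu n) := by
    refine isUnit_smul_one_add_smul_vecMulVec hmu ?_
    rw [hn]
    convert hlam using 1
    ring
  change (acousticTensor lam mu n)⁻¹ *ᵥ _ = d
  rw [mulVec_mulVec, nonsing_inv_mul _ ((isUnit_iff_isUnit_det _).mp h_unit), one_mulVec]

end AcousticTensor

section MomentTensor

variable {lami mui lame mue : ℝ}

theorem isSymm_Cdiff (A : Matrix (Fin 3) (Fin 3) ℝ) : (Cdiff lami mui lame mue A).IsSymm :=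
  (isSymm_elastC lame mue A).sub (isSymm_elastC lami mui A)

theorem Cdiff_add (A B : Matrix (Fin 3) (Fin 3) ℝ) :
    Cdiff lami mui lame mue (A + B) = Cdiff lami mui lame mue A + Cdiff lami mui lame mue B := by
  simp only [Cdiff, elastC_add, add_sub_add_comm]

theorem Cdiff_symPart (A : Matrix (Fin 3) (Fin 3) ℝ) :
    Cdiff lami mui lame mue (symPart A) = Cdiff lami mui lame mue A := by
  simp only [Cdiff, elastC_symPart]

variable {n d : Fin 3 → ℝ} {Ai Ae : Matrix (Fin 3) (Fin 3) ℝ}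

theorem Cdiff_mulVec_of_transmission (hn : n ⬝ᵥ n = 1) (hAi : Ai = Ae + vecMulVec d n)
    (htrans : elastC lame mue Ae *ᵥ n = elastC lami mui Ai *ᵥ n) :
    Cdiff lami mui lame mue Ae *ᵥ n = acousticTensor lami mui n *ᵥ d := by
  rw [Cdiff, sub_mulVec, htrans, hAi, elastC_add, add_mulVec, add_sub_cancel_left,
    elastC_vecMulVec_mulVec hn]

theorem emt_symPart_of_transmission (hmui : mui ≠ 0) (hlami : lami + 2 * mui ≠ 0)
    (hn : n ⬝ᵥ n = 1) (hAi : Ai = Ae + vecMulVec d n)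
    (htrans : elastC lame mue Ae *ᵥ n = elastC lami mui Ai *ᵥ n) :
    emt lami mui lame mue n (symPart Ae) = Cdiff lami mui lame mue Ai := by
  rw [emt, Cdiff_symPart, Cdiff_mulVec_of_transmission hn hAi htrans,
    Qmat_mulVec_acousticTensor_mulVec hmui hlami hn, ← Cdiff_add, ← hAi]

end MomentTensor

section JumpFormula

/-- The vector `b = (ℂA · B) U - (ℂA)(B U) - (ℂB)(A U)`, for an arbitrary map `C` on matrices in the
role of the elasticity tensor `ℂ`. -/
def bField (C : Matrix (Fin 3) (Fin 3) ℝ → Matrix (Fin 3) (Fin 3) ℝ)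
    (A B : Matrix (Fin 3) (Fin 3) ℝ) (U : Fin 3 → ℝ) : Fin 3 → ℝ :=
  frob (C A) B • U - C A *ᵥ (B *ᵥ U) - C B *ᵥ (A *ᵥ U)

variable {C Ci Ce : Matrix (Fin 3) (Fin 3) ℝ → Matrix (Fin 3) (Fin 3) ℝ}
  {A B Ai Bi Ae Be : Matrix (Fin 3) (Fin 3) ℝ} {n δ η : Fin 3 → ℝ} (U : Fin 3 → ℝ)

theorem bField_dotProduct_of_isSymm (hA : (C A).IsSymm) (hB : (C B).IsSymm) :
    bField C A B U ⬝ᵥ n =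
      frob (C A) B * (U ⬝ᵥ n) - (C A *ᵥ n) ⬝ᵥ (B *ᵥ U) - (C B *ᵥ n) ⬝ᵥ (A *ᵥ U) := by
  rw [bField, sub_dotProduct, sub_dotProduct, smul_dotProduct, smul_eq_mul,
    mulVec_dotProduct_of_isSymm hA, mulVec_dotProduct_of_isSymm hB]

theorem bField_sub_bField_dotProduct_of_transmission
    (hCi : ∀ A, (Ci A).IsSymm) (hCe : ∀ A, (Ce A).IsSymm)
    (hCe_comm : ∀ A B, frob (Ce A) B = frob (Ce B) A)
    (hAe : Ae = Ai + vecMulVec δ n) (hBe : Be = Bi + vecMulVec η n)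
    (htransA : Ce Ae *ᵥ n = Ci Ai *ᵥ n) (htransB : Ce Be *ᵥ n = Ci Bi *ᵥ n) :
    (bField Ci Ai Bi U - bField Ce Ae Be U) ⬝ᵥ n = -(U ⬝ᵥ n) * frob (Ce Ai - Ci Ai) Be := by
  have hAeU : Ae *ᵥ U = Ai *ᵥ U + (U ⬝ᵥ n) • δ := by
    rw [hAe, add_vecMulVec_mulVec, dotProduct_comm]
  have hBeU : Be *ᵥ U = Bi *ᵥ U + (U ⬝ᵥ n) • η := by
    rw [hBe, add_vecMulVec_mulVec, dotProduct_comm]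
  have h_interior : frob (Ci Ai) Be = frob (Ci Ai) Bi + (Ci Ai *ᵥ n) ⬝ᵥ η := by
    rw [hBe, frob_add_right, frob_vecMulVec_right]
  have h_exterior : frob (Ce Ae) Be = frob (Ce Ai) Be + (Ci Bi *ᵥ n) ⬝ᵥ δ := by
    rw [hCe_comm Ae, hCe_comm Ai, ← htransB, ← frob_vecMulVec_right, ← frob_add_right, ← hAe]
  rw [sub_dotProduct, bField_dotProduct_of_isSymm U (hCi Ai) (hCi Bi),
    bField_dotProduct_of_isSymm U (hCe Ae) (hCe Be), htransA, htransB, hAeU, hBeU, frob_sub_left,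
    h_interior, h_exterior]
  simp only [dotProduct_add, dotProduct_smul, smul_eq_mul]
  ring

end JumpFormula

theorem jump_of_b_dot_n_general {lami mui lame mue : ℝ}
    (hmui : mui ≠ 0) (hlami : lami + 2 * mui ≠ 0) {n : Fin 3 → ℝ} (hn : n ⬝ᵥ n = 1)
    (U : Fin 3 → ℝ) {δ η : Fin 3 → ℝ} {Ai Bi Ae Be : Matrix (Fin 3) (Fin 3) ℝ}
    (hAe : Ae = Ai + vecMulVec δ n) (hBe : Be = Bi + vecMulVec η n)
    (htransA : elastC lame mue Ae *ᵥ n = elastC lami mui Ai *ᵥ n)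
    (htransB : elastC lame mue Be *ᵥ n = elastC lami mui Bi *ᵥ n) :
    (bField (elastC lami mui) Ai Bi U - bField (elastC lame mue) Ae Be U) ⬝ᵥ n =
      -(U ⬝ᵥ n) * frob (emt lami mui lame mue n (symPart Ae)) (symPart Be) := by
  have hAi : Ai = Ae + vecMulVec (-δ) n := by
    rw [hAe, neg_vecMulVec, add_neg_cancel_right]
  rw [emt_symPart_of_transmission hmui hlami hn hAi htransA,
    frob_symPart_right_of_isSymm Be (isSymm_Cdiff Ai)]
  exact bField_sub_bField_dotProduct_of_transmission U (isSymm_elastC lami mui)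
    (isSymm_elastC lame mue) (frob_elastC_comm lame mue) hAe hBe htransA htransB

/-- The jump of the normal component of the field
`b^s = (ℂ^s A_s · B_s) U − (ℂ^s A_s)(B_s U) − (ℂ^s B_s)(A_s U)` across the interface
equals `−(U·n) 𝕄Â_e · B̂_e`. -/
theorem jump_of_b_dot_n (lami mui lame mue : ℝ)
    (hmui : mui > 0) (hsum : lami + mui > 0)
    (n : Fin 3 → ℝ) (hn : n ⬝ᵥ n = 1)
    (U δ η : Fin 3 → ℝ)
    (Ai Bi Ae Be : Matrix (Fin 3) (Fin 3) ℝ)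
    (hAe : Ae = Ai + vecMulVec δ n) (hBe : Be = Bi + vecMulVec η n)
    (htransA : (elastC lame mue Ae).mulVec n = (elastC lami mui Ai).mulVec n)
    (htransB : (elastC lame mue Be).mulVec n = (elastC lami mui Bi).mulVec n) :
    ((frob (elastC lami mui Ai) Bi • U
        - (elastC lami mui Ai).mulVec (Bi.mulVec U)
        - (elastC lami mui Bi).mulVec (Ai.mulVec U))
      - (frob (elastC lame mue Ae) Be • U
        - (elastC lame mue Ae).mulVec (Be.mulVec U)
        - (elastC lame mue Be).mulVec (Ae.mulVec U))) ⬝ᵥ n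
      = -(U ⬝ᵥ n) * frob (emt lami mui lame mue n (symPart Ae)) (symPart Be) :=
  jump_of_b_dot_n_general hmui.ne' (by linarith) hn U hAe hBe htransA htransB
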